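/- Let V be a unital and integral quantale. A V-category Y is an Ord-W-Mal'tsev object in the Ord-category (V-Cat)^op if and only if Y is a symmetric V_∧-category, i.e. Y(x,y) = Y(y,x) and Y(x,y) ∧ Y(y,z) ≤ Y(x,z) for all x,y,z ∈ Y. -/

import Mathlib

open CategoryTheory

universe w v u

/-- An `Ord`-enrichment of a category: a preorder on each hom-set,
preserved by composition on both sides. -/
class OrdEnrichment (C : Type u) [Category.{v} C] : Type (max u v) where
  ord : ∀ {X Y : C}, (X ⟶ Y) → (X ⟶ Y) → Prop
  ord_refl : ∀ {X Y : C} (f : X ⟶ Y), ord f f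
  ord_trans : ∀ {X Y : C} {f g h : X ⟶ Y}, ord f g → ord g h → ord f h
  precomp_ord : ∀ {X Y Z : C} (e : X ⟶ Y) {f g : Y ⟶ Z}, ord f g → ord (e ≫ f) (e ≫ g)
  postcomp_ord : ∀ {X Y Z : C} {f g : X ⟶ Y} (h : Y ⟶ Z), ord f g → ord (f ≫ h) (g ≫ h)

/-- The preorder on hom-sets of an `Ord`-category. -/
def homLe {C : Type u} [Category.{v} C] [OrdEnrichment C] {X Y : C} (f g : X ⟶ Y) : Prop :=
  OrdEnrichment.ord f g

infixl:50 " ≼ " => homLe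

section

variable {C : Type u} [Category.{v} C] [OrdEnrichment C]

/-- A full (ff-) morphism. -/
def IsFF {X Y : C} (m : X ⟶ Y) : Prop :=
  ∀ {A : C} (a a' : A ⟶ X), (a ≫ m) ≼ (a' ≫ m) → a ≼ a'

/-- An ff-monomorphism: a full monomorphism. -/
def IsFFMono {X Y : C} (m : X ⟶ Y) : Prop := IsFF m ∧ Mono m

/-- An so-morphism: a morphism left orthogonal to every ff-monomorphism. -/
def IsSO {A B : C} (e : A ⟶ B) : Prop :=
  ∀ {X Y : C} (m : X ⟶ Y), IsFFMono m → ∀ (u : A ⟶ X) (v : B ⟶ Y),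
    u ≫ m = e ≫ v → ∃ d : B ⟶ X, e ≫ d = u ∧ d ≫ m = v

/-- The (strict) comma object square for the ordered pair `(f, g)`. -/
structure IsCommaSq {X Y Z : C} (f : X ⟶ Y) (g : Z ⟶ Y) (P : C)
    (π₁ : P ⟶ X) (π₂ : P ⟶ Z) : Prop where
  le : (π₁ ≫ f) ≼ (π₂ ≫ g)
  lift : ∀ {A : C} (α : A ⟶ X) (β : A ⟶ Z), (α ≫ f) ≼ (β ≫ g) →
    ∃! h : A ⟶ P, h ≫ π₁ = α ∧ h ≫ π₂ = β
  lift_ord : ∀ {A : C} {h h' : A ⟶ P}, (h ≫ π₁) ≼ (h' ≫ π₁) → (h ≫ π₂) ≼ (h' ≫ π₂) → h ≼ h'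

/-- A 2-pullback square (pullback with the `Ord`-enriched universal property). -/
structure Is2Pullback {X Y Z : C} (f : X ⟶ Z) (g : Y ⟶ Z) (P : C)
    (p : P ⟶ X) (q : P ⟶ Y) : Prop where
  comm : p ≫ f = q ≫ g
  lift : ∀ {A : C} (a : A ⟶ X) (b : A ⟶ Y), a ≫ f = b ≫ g →
    ∃! h : A ⟶ P, h ≫ p = a ∧ h ≫ q = b
  lift_ord : ∀ {A : C} {h h' : A ⟶ P}, (h ≫ p) ≼ (h' ≫ p) → (h ≫ q) ≼ (h' ≫ q) → h ≼ h'

/-- A binary 2-product. -/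
structure Is2Product (X Y : C) (P : C) (p : P ⟶ X) (q : P ⟶ Y) : Prop where
  lift : ∀ {A : C} (a : A ⟶ X) (b : A ⟶ Y), ∃! h : A ⟶ P, h ≫ p = a ∧ h ≫ q = b
  lift_ord : ∀ {A : C} {h h' : A ⟶ P}, (h ≫ p) ≼ (h' ≫ p) → (h ≫ q) ≼ (h' ≫ q) → h ≼ h'

/-- A 2-equalizer. -/
structure Is2Equalizer {X Y : C} (f g : X ⟶ Y) (E : C) (i : E ⟶ X) : Prop where
  comm : i ≫ f = i ≫ g
  lift : ∀ {A : C} (a : A ⟶ X), a ≫ f = a ≫ g → ∃! h : A ⟶ E, h ≫ i = a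
  lift_ord : ∀ {A : C} {h h' : A ⟶ E}, (h ≫ i) ≼ (h' ≫ i) → h ≼ h'

/-- A bicoinserter of a parallel pair. -/
structure IsBicoinserter {X A E : C} (a b : X ⟶ A) (e : A ⟶ E) : Prop where
  le : (a ≫ e) ≼ (b ≫ e)
  desc : ∀ {F : C} (f : A ⟶ F), (a ≫ f) ≼ (b ≫ f) →
    ∃ t : E ⟶ F, (e ≫ t) ≼ f ∧ f ≼ (e ≫ t)
  desc_ord : ∀ {F : C} {f f' : A ⟶ F} {t t' : E ⟶ F},
    (e ≫ t) ≼ f → f ≼ (e ≫ t) → (e ≫ t') ≼ f' → f' ≼ (e ≫ t') → f ≼ f' → t ≼ t'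

/-- A relation from `X` to `Y` in an `Ord`-category: a jointly ff-monomorphic span. -/
structure RelStr (X Y : C) : Type (max u v) where
  obj : C
  p : obj ⟶ X
  q : obj ⟶ Y
  jointly_ff : ∀ {A : C} (a a' : A ⟶ obj), (a ≫ p) ≼ (a' ≫ p) → (a ≫ q) ≼ (a' ≫ q) → a ≼ a'
  jointly_mono : ∀ {A : C} (a a' : A ⟶ obj), a ≫ p = a' ≫ p → a ≫ q = a' ≫ q → a = a'

/-- `(x, y) ∈_A R`. -/
def RelStr.Mem {X Y : C} (R : RelStr X Y) {A : C} (x : A ⟶ X) (y : A ⟶ Y) : Prop :=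
  ∃ h : A ⟶ R.obj, h ≫ R.p = x ∧ h ≫ R.q = y

/-- `R ⊆ S`: `R` factors through `S` (over `X × Y`). -/
def RelStr.Sub {X Y : C} (R S : RelStr X Y) : Prop :=
  ∃ φ : R.obj ⟶ S.obj, φ ≫ S.p = R.p ∧ φ ≫ S.q = R.q

/-- `R ≅ S`: mutual factorisation. -/
def RelStr.Iso {X Y : C} (R S : RelStr X Y) : Prop := R.Sub S ∧ S.Sub R

/-- The opposite relation `R°`. -/
def RelStr.op {X Y : C} (R : RelStr X Y) : RelStr Y X where
  obj := R.obj
  p := R.q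
  q := R.p
  jointly_ff := fun a a' h1 h2 => R.jointly_ff a a' h2 h1
  jointly_mono := fun a a' h1 h2 => R.jointly_mono a a' h2 h1

/-- A relation is an (order) ideal when it is closed under lowering the first
coordinate and raising the second coordinate. -/
def IsIdealRel {X Y : C} (R : RelStr X Y) : Prop :=
  ∀ {A : C} (x x' : A ⟶ X) (y y' : A ⟶ Y), x' ≼ x → R.Mem x y → y ≼ y' → R.Mem x' y'

/-- The relation `f_♯` given by the span `(1_X, f)`. -/
def sharpRel {X Y : C} (f : X ⟶ Y) : RelStr X Y where
  obj := X
  p := 𝟙 X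
  q := f
  jointly_ff := fun a a' h1 _ => by simpa using h1
  jointly_mono := fun a a' h1 _ => by simpa using h1

/-- The relation `f°`, the opposite of `f_♯`. -/
def cosharpRel {X Y : C} (f : X ⟶ Y) : RelStr Y X := (sharpRel f).op

/-- `M` is the meet (intersection) `R ∧ S` of two relations. -/
def IsMeetRel {X Y : C} (R S M : RelStr X Y) : Prop :=
  M.Sub R ∧ M.Sub S ∧
    ∀ {A : C} (x : A ⟶ X) (y : A ⟶ Y), R.Mem x y → S.Mem x y → M.Mem x y

/-- `T` is the composite `S ∘ R` of the relations `R : X ↬ Y` and `S : Y ↬ Z`,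
obtained via the (so-morphism, ff-monomorphism) factorisation of the span
given by the 2-pullback over the middle object. -/
def IsCompositeRel {X Y Z : C} (R : RelStr X Y) (S : RelStr Y Z) (T : RelStr X Z) : Prop :=
  ∃ (P : C) (p₁ : P ⟶ R.obj) (p₂ : P ⟶ S.obj) (e : P ⟶ T.obj),
    Is2Pullback R.q S.p P p₁ p₂ ∧ IsSO e ∧ e ≫ T.p = p₁ ≫ R.p ∧ e ≫ T.q = p₂ ≫ S.q

/-- `R` is the ideal `f_* = f / 1_Y : X ↬ Y`. -/
def IsStarRel {X Y : C} (f : X ⟶ Y) (R : RelStr X Y) : Prop :=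
  IsCommaSq f (𝟙 Y) R.obj R.p R.q

/-- `R` is the ideal `f^* = 1_Y / f : Y ↬ X`. -/
def IsCostarRel {X Y : C} (f : X ⟶ Y) (R : RelStr Y X) : Prop :=
  IsCommaSq (𝟙 Y) f R.obj R.p R.q

/-- `R` is the identity ideal `I_X = 1_X / 1_X`. -/
def IsIdRel (X : C) (R : RelStr X X) : Prop :=
  IsCommaSq (𝟙 X) (𝟙 X) R.obj R.p R.q

/-- `S` is the 2-pullback of the relation `R ↣ X × Y` along `f × g`. -/
def IsRelPullback {X Y U V : C} (R : RelStr X Y) (f : U ⟶ X) (g : V ⟶ Y)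
    (S : RelStr U V) : Prop :=
  ∃ h : S.obj ⟶ R.obj, h ≫ R.p = S.p ≫ f ∧ h ≫ R.q = S.q ≫ g ∧
    ∀ {A : C} (a : A ⟶ U) (b : A ⟶ V) (c : A ⟶ R.obj),
      c ≫ R.p = a ≫ f → c ≫ R.q = b ≫ g →
      ∃ d : A ⟶ S.obj, d ≫ S.p = a ∧ d ≫ S.q = b ∧ d ≫ h = c

/-- A binary 2-coproduct. -/
structure Is2Coproduct (X Y : C) (P : C) (i : X ⟶ P) (j : Y ⟶ P) : Prop where
  desc : ∀ {A : C} (a : X ⟶ A) (b : Y ⟶ A), ∃! h : P ⟶ A, i ≫ h = a ∧ j ≫ h = b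
  desc_ord : ∀ {A : C} {h h' : P ⟶ A}, (i ≫ h) ≼ (i ≫ h') → (j ≫ h) ≼ (j ≫ h') → h ≼ h'

/-- A ternary 2-coproduct. -/
structure Is3Coproduct (X Y Z : C) (P : C) (i : X ⟶ P) (j : Y ⟶ P) (k : Z ⟶ P) : Prop where
  desc : ∀ {A : C} (a : X ⟶ A) (b : Y ⟶ A) (c : Z ⟶ A),
    ∃! h : P ⟶ A, i ≫ h = a ∧ j ≫ h = b ∧ k ≫ h = c
  desc_ord : ∀ {A : C} {h h' : P ⟶ A},
    (i ≫ h) ≼ (i ≫ h') → (j ≫ h) ≼ (j ≫ h') → (k ≫ h) ≼ (k ≫ h') → h ≼ h'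

/-- Reflexivity of a relation on `X`: the diagonal factors through it. -/
def ReflexiveRel {X : C} (R : RelStr X X) : Prop := R.Mem (𝟙 X) (𝟙 X)

/-- Transitivity of a relation on `X`: `R ∘ R ⊆ R`. -/
def TransitiveRel {X : C} (R : RelStr X X) : Prop :=
  ∀ T : RelStr X X, IsCompositeRel R R T → T.Sub R

/-- A congruence: a reflexive and transitive ideal. -/
def IsCongruence {X : C} (R : RelStr X X) : Prop :=
  IsIdealRel R ∧ ReflexiveRel R ∧ TransitiveRel R

/-- An effective congruence: `R ≅ f^* ∘ f_*` for some morphism `f`. -/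
def EffectiveCongruence {X : C} (R : RelStr X X) : Prop :=
  ∃ (Y : C) (f : X ⟶ Y) (Fstar : RelStr X Y) (Fco : RelStr Y X) (T : RelStr X X),
    IsStarRel f Fstar ∧ IsCostarRel f Fco ∧ IsCompositeRel Fstar Fco T ∧ R.Iso T

/-- The `Ord`-enriched difunctionality property of a relation. -/
def OrdDifunctional {X Y : C} (D : RelStr X Y) : Prop :=
  ∀ {A : C} (x u u' : A ⟶ X) (y y' v : A ⟶ Y),
    D.Mem x y → y ≼ y' → D.Mem u y' → u ≼ u' → D.Mem u' v → D.Mem x v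

end

/-- A regular `Ord`-category: finite weighted limits, an
(so-morphism, ff-monomorphism) factorisation system, so-morphisms stable under
2-pullbacks, and every so-morphism the bicoinserter of its comma object projections. -/
structure IsRegularOrd (C : Type u) [Category.{v} C] [OrdEnrichment C] : Prop where
  hasTerminal : ∃ T : C, ∀ A : C, ∃ f : A ⟶ T, ∀ g : A ⟶ T, g = f
  has2Products : ∀ X Y : C, ∃ (P : C) (p : P ⟶ X) (q : P ⟶ Y), Is2Product X Y P p q
  has2Equalizers : ∀ {X Y : C} (f g : X ⟶ Y), ∃ (E : C) (i : E ⟶ X), Is2Equalizer f g E i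
  has2Pullbacks : ∀ {X Y Z : C} (f : X ⟶ Z) (g : Y ⟶ Z),
    ∃ (P : C) (p : P ⟶ X) (q : P ⟶ Y), Is2Pullback f g P p q
  hasCommaObjects : ∀ {X Y Z : C} (f : X ⟶ Y) (g : Z ⟶ Y),
    ∃ (P : C) (p : P ⟶ X) (q : P ⟶ Z), IsCommaSq f g P p q
  fact : ∀ {X Y : C} (f : X ⟶ Y), ∃ (I : C) (e : X ⟶ I) (m : I ⟶ Y),
    IsSO e ∧ IsFFMono m ∧ e ≫ m = f
  so_pullback_stable : ∀ {X Y Z P : C} (f : X ⟶ Z) (g : Y ⟶ Z) (p : P ⟶ X) (q : P ⟶ Y),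
    Is2Pullback f g P p q → IsSO g → IsSO p
  so_bicoinserter : ∀ {A B P : C} (e : A ⟶ B), IsSO e →
    ∀ (π₁ π₂ : P ⟶ A), IsCommaSq e e P π₁ π₂ → IsBicoinserter π₁ π₂ e

/-- An `Ord`-Mal'tsev category: every ideal is `Ord`-difunctional. -/
def IsOrdMaltsev (C : Type u) [Category.{v} C] [OrdEnrichment C] : Prop :=
  ∀ (X Y : C) (D : RelStr X Y), IsIdealRel D → OrdDifunctional D

/-- An `Ord`-W-Mal'tsev object: every ideal is `Ord`-difunctional with respect to
generalised elements with domain `Y`. -/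
def IsOrdWMaltsevObj {C : Type u} [Category.{v} C] [OrdEnrichment C] (Y : C) : Prop :=
  ∀ (X Z : C) (R : RelStr X Z), IsIdealRel R →
    ∀ (x u u' : Y ⟶ X) (z z' v : Y ⟶ Z),
      R.Mem x z → z ≼ z' → R.Mem u z' → u ≼ u' → R.Mem u' v → R.Mem x v


/-- A unital and integral quantale: a complete lattice with an associative
multiplication preserving arbitrary joins in each variable, whose unit is the
top element. -/
structure QuantaleStr (V : Type w) [CompleteLattice V] : Type w where
  mul : V → V → V
  mul_assoc : ∀ a b c : V, mul (mul a b) c = mul a (mul b c)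
  mul_sSup : ∀ (a : V) (s : Set V), mul a (sSup s) = ⨆ b ∈ s, mul a b
  sSup_mul : ∀ (s : Set V) (a : V), mul (sSup s) a = ⨆ b ∈ s, mul b a
  top_mul : ∀ a : V, mul ⊤ a = a
  mul_top : ∀ a : V, mul a ⊤ = a

/-- A `V`-category for a unital and integral quantale `V` (the unit `k` is `⊤`). -/
structure VCatStr {V : Type w} [CompleteLattice V] (Q : QuantaleStr V) :
    Type (max w (u + 1)) where
  carrier : Type u
  hom : carrier → carrier → V
  refl_le : ∀ x, ⊤ ≤ hom x x
  comp_le : ∀ x y z, Q.mul (hom x y) (hom y z) ≤ hom x z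

/-- `Y` is a symmetric `V_∧`-category. -/
def IsSymmetricVMeetCat {V : Type w} [CompleteLattice V] {Q : QuantaleStr V}
    (Y : VCatStr.{w, u} Q) : Prop :=
  (∀ x y : Y.carrier, Y.hom x y = Y.hom y x) ∧
    ∀ x y z : Y.carrier, Y.hom x y ⊓ Y.hom y z ≤ Y.hom x z

/-- A `V`-functor. -/
structure VFun {V : Type w} [CompleteLattice V] {Q : QuantaleStr V}
    (X Y : VCatStr.{w, u} Q) : Type u where
  toFun : X.carrier → Y.carrier
  map_le : ∀ x x', X.hom x x' ≤ Y.hom (toFun x) (toFun x')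

/-- The category `V`-`Cat` of `V`-categories and `V`-functors. -/
instance VCatStr.category {V : Type w} [CompleteLattice V] {Q : QuantaleStr V} :
    Category.{u} (VCatStr.{w, u} Q) where
  Hom X Y := VFun X Y
  id X := ⟨fun x => x, fun _ _ => le_rfl⟩
  comp f g := ⟨fun x => g.toFun (f.toFun x), fun x x' =>
    le_trans (f.map_le x x') (g.map_le _ _)⟩
  id_comp := by intros; rfl
  comp_id := by intros; rfl
  assoc := by intros; rfl

/-- The natural `Ord`-enrichment of `(V`-`Cat)ᵒᵖ`: for `V`-functors
`f, g : X ⟶ Y` (i.e. morphisms `Y ⟶ X` of the opposite category),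
`f ≼ g` iff `Y(f x, g x) = k` for all `x ∈ X`. -/
instance VCatStr.opOrdEnrichment {V : Type w} [CompleteLattice V] {Q : QuantaleStr V} :
    OrdEnrichment (VCatStr.{w, u} Q)ᵒᵖ where
  ord {P R} u v := ∀ x : R.unop.carrier,
    P.unop.hom (u.unop.toFun x) (v.unop.toFun x) = ⊤
  ord_refl := by
    intro P R u x
    exact le_antisymm le_top (P.unop.refl_le _)
  ord_trans := by
    intro P R u v w huv hvw x
    have h := P.unop.comp_le (u.unop.toFun x) (v.unop.toFun x) (w.unop.toFun x)
    rw [huv x, hvw x, Q.top_mul] at h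
    exact le_antisymm le_top h
  precomp_ord := by
    intro P R T e f g hfg x
    have h := e.unop.map_le (f.unop.toFun x) (g.unop.toFun x)
    rw [hfg x] at h
    exact le_antisymm le_top h
  postcomp_ord := by
    intro P R T f g h hfg x
    exact hfg (h.unop.toFun x)

/-!
In `V`-`Cat` a relation `X ↬ Z` of `(V`-`Cat)ᵒᵖ` is a cospan `p : X ⟶ R ⟵ Z : q`, and joint
monicity makes `p` and `q` jointly surjective. If it is an ideal, testing it on the double
mapping cylinder of `p` and `q` splits `R` into disjoint copies of `X` and `Z` with
`R(q b, p a) = ⊥`: ideals are the collages of `V`-distributors, and `(x, z) ∈_Y R` reduces to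
`R(p a, q b) ≤ Y(x a, z b)` for all `a`, `b`. So the Mal'tsev condition on `Y` becomes
`Y(x, y) ∧ Y(u, y) ∧ Y(u, v) ≤ Y(x, v)`; its necessity is seen on the distributors
between one-point categories, which are the elements of `V`.
-/

open Opposite

section

variable {V : Type w} [CompleteLattice V]

namespace QuantaleStr

variable (Q : QuantaleStr V)

theorem mul_mono {a b c d : V} (hab : a ≤ b) (hcd : c ≤ d) : Q.mul a c ≤ Q.mul b d := by
  have hb : sSup {a, b} = b := by rw [sSup_pair, sup_eq_right.2 hab]
  have hd : sSup {c, d} = d := by rw [sSup_pair, sup_eq_right.2 hcd]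
  calc Q.mul a c ≤ Q.mul (sSup {a, b}) c := by
        rw [Q.sSup_mul]
        exact le_iSup₂_of_le a (Set.mem_insert a {b}) le_rfl
    _ = Q.mul b c := by rw [hb]
    _ ≤ Q.mul b (sSup {c, d}) := by
        rw [Q.mul_sSup]
        exact le_iSup₂_of_le c (Set.mem_insert c {d}) le_rfl
    _ = Q.mul b d := by rw [hd]

theorem mul_le_left (a b : V) : Q.mul a b ≤ a :=
  (Q.mul_mono le_rfl le_top).trans_eq (Q.mul_top a)

theorem mul_le_right (a b : V) : Q.mul a b ≤ b :=
  (Q.mul_mono le_top le_rfl).trans_eq (Q.top_mul b)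

end QuantaleStr

variable {Q : QuantaleStr V} {X Y Z W : VCatStr.{w, u} Q}

attribute [ext] VFun

namespace VCatStr

theorem hom_self (x : Y.carrier) : Y.hom x x = ⊤ :=
  top_le_iff.1 (Y.refl_le x)

theorem hom_le_hom {x x' z z' : Y.carrier} (hx : Y.hom x' x = ⊤) (hz : Y.hom z z' = ⊤) :
    Y.hom x z ≤ Y.hom x' z' :=
  calc Y.hom x z = Q.mul (Q.mul (Y.hom x' x) (Y.hom x z)) (Y.hom z z') := by
        rw [hx, hz, Q.top_mul, Q.mul_top]
    _ ≤ Q.mul (Y.hom x' z) (Y.hom z z') := Q.mul_mono (Y.comp_le _ _ _) le_rfl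
    _ ≤ Y.hom x' z' := Y.comp_le _ _ _

theorem op_hom_ext {f g : op Y ⟶ op X} (h : ∀ a, f.unop.toFun a = g.unop.toFun a) : f = g :=
  Quiver.Hom.unop_inj (VFun.ext (funext h))

/-- The indiscrete `V`-category on a type `S`, right adjoint to the carrier functor. -/
def indiscrete (Q : QuantaleStr V) (S : Type u) : VCatStr.{w, u} Q where
  carrier := S
  hom _ _ := ⊤
  refl_le _ := le_rfl
  comp_le _ _ _ := le_top

/-- The `V`-functor from the one-point `V`-category picking the object `y`. -/
def point (y : Y.carrier) : indiscrete Q PUnit ⟶ Y :=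
  ⟨fun _ => y, fun _ _ => Y.refl_le y⟩

/-- Difunctionality of the hom of `Y`, as a relation from `Y` to itself with truth values in the
lattice `V`. -/
def IsDifunctional (Y : VCatStr.{w, u} Q) : Prop :=
  ∀ x y u v : Y.carrier, Y.hom x y ⊓ Y.hom u y ⊓ Y.hom u v ≤ Y.hom x v

theorem isDifunctional_iff_isSymmetricVMeetCat :
    Y.IsDifunctional ↔ IsSymmetricVMeetCat Y := by
  constructor
  · intro hY
    have hom_le_symm (x y : Y.carrier) : Y.hom x y ≤ Y.hom y x := by
      simpa only [hom_self, top_inf_eq, inf_top_eq] using hY y y x x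
    refine ⟨fun x y => (hom_le_symm x y).antisymm (hom_le_symm y x), fun x y z => ?_⟩
    simpa only [hom_self, inf_top_eq] using hY x y y z
  · rintro ⟨symm, trans⟩ x y u v
    rw [symm u y]
    exact (inf_le_inf_right _ (trans x y u)).trans (trans x u v)

end VCatStr

/-- A `V`-distributor (`V`-bimodule) from `X` to `Z`. -/
structure VDist (X Z : VCatStr.{w, u} Q) where
  toFun : X.carrier → Z.carrier → V
  hom_mul_le : ∀ a a' b, Q.mul (X.hom a a') (toFun a' b) ≤ toFun a b
  mul_hom_le : ∀ a b b', Q.mul (toFun a b) (Z.hom b b') ≤ toFun a b'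

namespace VDist

/-- The distributor with constant value `c`; between one-point `V`-categories every distributor
has this form. -/
def const (X Z : VCatStr.{w, u} Q) (c : V) : VDist X Z where
  toFun _ _ := c
  hom_mul_le _ _ _ := Q.mul_le_right _ _
  mul_hom_le _ _ _ := Q.mul_le_left _ _

/-- The distributor `W(p -, q -)` of a cospan. The companion of `p` and the conjoint of `q` are the
cases where the other leg is an identity. -/
def ofCospan (p : X ⟶ W) (q : Z ⟶ W) : VDist X Z where
  toFun a b := W.hom (p.toFun a) (q.toFun b)
  hom_mul_le _ _ _ := (Q.mul_mono (p.map_le _ _) le_rfl).trans (W.comp_le _ _ _)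
  mul_hom_le _ _ _ := (Q.mul_mono le_rfl (q.map_le _ _)).trans (W.comp_le _ _ _)

variable (φ : VDist X Z)

/-- The hom of the collage of a distributor. -/
def collageHom : X.carrier ⊕ Z.carrier → X.carrier ⊕ Z.carrier → V
  | .inl a, .inl a' => X.hom a a'
  | .inl a, .inr b => φ.toFun a b
  | .inr _, .inl _ => ⊥
  | .inr b, .inr b' => Z.hom b b'

/-- The collage of a distributor: the disjoint union of `X` and `Z`, with `φ` as the hom from
objects of `X` to objects of `Z`. -/
def collage : VCatStr.{w, u} Q where
  carrier := X.carrier ⊕ Z.carrier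
  hom := φ.collageHom
  refl_le := Sum.rec X.refl_le Z.refl_le
  comp_le
    | .inl _, .inl _, .inl _ => X.comp_le _ _ _
    | .inl _, .inl _, .inr _ => φ.hom_mul_le _ _ _
    | .inl _, .inr _, .inl _ => (Q.mul_le_right _ _).trans bot_le
    | .inl _, .inr _, .inr _ => φ.mul_hom_le _ _ _
    | .inr _, .inl _, _ => (Q.mul_le_left _ _).trans bot_le
    | .inr _, .inr _, .inl _ => Q.mul_le_right _ _
    | .inr _, .inr _, .inr _ => Z.comp_le _ _ _

/-- The inclusion of the source of a distributor in its collage. -/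
def inl : X ⟶ φ.collage := ⟨Sum.inl, fun _ _ => le_rfl⟩

/-- The inclusion of the target of a distributor in its collage. -/
def inr : Z ⟶ φ.collage := ⟨Sum.inr, fun _ _ => le_rfl⟩

/-- The relation in `(V`-`Cat)ᵒᵖ` given by the collage of a distributor. -/
def rel : RelStr (op X) (op Z) where
  obj := op φ.collage
  p := φ.inl.op
  q := φ.inr.op
  jointly_ff _ _ hp hq := Sum.rec hp hq
  jointly_mono _ _ hp hq := VCatStr.op_hom_ext <| Sum.rec
    (fun a => congrArg (fun f => f.unop.toFun a) hp)
    (fun b => congrArg (fun f => f.unop.toFun b) hq)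

theorem mem_rel_iff {x : op Y ⟶ op X} {z : op Y ⟶ op Z} :
    φ.rel.Mem x z ↔ ∀ a b, φ.toFun a b ≤ Y.hom (x.unop.toFun a) (z.unop.toFun b) := by
  constructor
  · rintro ⟨h, rfl, rfl⟩ a b
    exact h.unop.map_le (.inl a) (.inr b)
  · intro hφ
    let desc : φ.collage ⟶ Y :=
      { toFun := Sum.elim x.unop.toFun z.unop.toFun
        map_le := by
          rintro (a | b) (a' | b')
          · exact x.unop.map_le a a'
          · exact hφ a b'
          · exact bot_le
          · exact z.unop.map_le b b' }
    exact ⟨desc.op, rfl, rfl⟩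

theorem isIdealRel_rel : IsIdealRel φ.rel := by
  rintro ⟨A⟩ x x' z z' hx hxz hz
  exact φ.mem_rel_iff.2 fun a b =>
    (φ.mem_rel_iff.1 hxz a b).trans (VCatStr.hom_le_hom (hx a) (hz b))

end VDist

/-- The double mapping cylinder of a cospan `p : X ⟶ W ⟵ Z : q`: the disjoint union of `X`, `W`
and `Z`, with `p` freely lowered and `q` freely raised. -/
def doubleCylinder (p : X ⟶ W) (q : Z ⟶ W) : VCatStr.{w, u} Q :=
  (VDist.ofCospan (p ≫ (VDist.ofCospan (𝟙 W) q).inl) (𝟙 _)).collage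

namespace doubleCylinder

variable (p : X ⟶ W) (q : Z ⟶ W)

/-- The inclusion of the lower end `X` of the double mapping cylinder. -/
def lower : X ⟶ doubleCylinder p q := VDist.inl _

/-- The inclusion of the middle part `W` of the double mapping cylinder. -/
def middle : W ⟶ doubleCylinder p q := (VDist.ofCospan (𝟙 W) q).inl ≫ VDist.inr _

/-- The inclusion of the upper end `Z` of the double mapping cylinder. -/
def upper : Z ⟶ doubleCylinder p q := (VDist.ofCospan (𝟙 W) q).inr ≫ VDist.inr _

theorem lower_le : (lower p q).op ≼ (p ≫ middle p q).op :=
  fun a => W.hom_self (p.toFun a)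

theorem le_upper : (q ≫ middle p q).op ≼ (upper p q).op :=
  fun b => W.hom_self (q.toFun b)

/-- The inclusion of the two ends of the double mapping cylinder. -/
def ends : X.carrier ⊕ Z.carrier → (doubleCylinder p q).carrier :=
  Sum.elim (lower p q).toFun (upper p q).toFun

theorem ends_injective : Function.Injective (ends p q) :=
  Sum.inl_injective.sumElim (Sum.inr_injective.comp Sum.inr_injective) fun _ _ => Sum.inl_ne_inr

theorem hom_ends (t t' : X.carrier ⊕ Z.carrier) :
    (doubleCylinder p q).hom (ends p q t) (ends p q t') =
      (VDist.ofCospan p q).collage.hom t t' := by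
  rcases t with _ | _ <;> rcases t' with _ | _ <;> rfl

end doubleCylinder

namespace RelStr

theorem Sub.mem {C : Type u} [Category.{v} C] [OrdEnrichment C] {A B T : C} {R S : RelStr A B}
    (hRS : R.Sub S) {x : T ⟶ A} {y : T ⟶ B} (hR : R.Mem x y) : S.Mem x y := by
  obtain ⟨φ, hp, hq⟩ := hRS
  obtain ⟨h, rfl, rfl⟩ := hR
  exact ⟨h ≫ φ, by rw [Category.assoc, hp], by rw [Category.assoc, hq]⟩

variable (R : RelStr (Opposite.op X) (Opposite.op Z))

/-- The union of the two legs of a relation in `(V`-`Cat)ᵒᵖ`, seen as a cospan in `V`-`Cat`. -/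
def legs : X.carrier ⊕ Z.carrier → R.obj.unop.carrier :=
  Sum.elim R.p.unop.toFun R.q.unop.toFun

theorem legs_surjective : Function.Surjective R.legs := by
  refine Function.surjective_of_right_cancellable_Prop fun g₁ g₂ hg => ?_
  let classify (g : R.obj.unop.carrier → Prop) :
      R.obj.unop ⟶ VCatStr.indiscrete Q (ULift.{u} Prop) :=
    ⟨fun r => ⟨g r⟩, fun _ _ => le_top⟩
  have classify_eq : (classify g₁).op = (classify g₂).op :=
    R.jointly_mono _ _
      (VCatStr.op_hom_ext fun a => congrArg ULift.up (congrFun hg (.inl a)))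
      (VCatStr.op_hom_ext fun b => congrArg ULift.up (congrFun hg (.inr b)))
  exact funext fun r => congrArg (fun f => (f.unop.toFun r).down) classify_eq

/-- The distributor `R(p -, q -)` underlying a relation in `(V`-`Cat)ᵒᵖ`. -/
def dist : VDist X Z := VDist.ofCospan R.p.unop R.q.unop

end RelStr

namespace IsIdealRel

variable {R : RelStr (op X) (op Z)}

theorem mem_doubleCylinder (hR : IsIdealRel R) :
    R.Mem (doubleCylinder.lower R.p.unop R.q.unop).op
      (doubleCylinder.upper R.p.unop R.q.unop).op :=
  hR _ _ _ _ (doubleCylinder.lower_le _ _)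
    ⟨(doubleCylinder.middle R.p.unop R.q.unop).op, rfl, rfl⟩ (doubleCylinder.le_upper _ _)

theorem rel_dist_sub (hR : IsIdealRel R) : R.dist.rel.Sub R := by
  obtain ⟨h, hp, hq⟩ := hR.mem_doubleCylinder
  have h_legs (t) : h.unop.toFun (R.legs t) = doubleCylinder.ends R.p.unop R.q.unop t := by
    rcases t with a | b
    · exact congrArg (fun f => f.unop.toFun a) hp
    · exact congrArg (fun f => f.unop.toFun b) hq
  let split := Function.surjInv R.legs_surjective
  have legs_split (r) : R.legs (split r) = r := Function.surjInv_eq R.legs_surjective r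
  have split_legs (t) : split (R.legs t) = t :=
    doubleCylinder.ends_injective R.p.unop R.q.unop (by rw [← h_legs, legs_split, h_legs])
  have h_eq (r) : h.unop.toFun r = doubleCylinder.ends _ _ (split r) := by
    rw [← h_legs, legs_split]
  let splitFunctor : R.obj.unop ⟶ R.dist.collage :=
    { toFun := split
      map_le := fun r r' => by
        have h_le := h.unop.map_le r r'
        rw [h_eq, h_eq] at h_le
        exact h_le.trans_eq (doubleCylinder.hom_ends _ _ _ _) }
  exact ⟨splitFunctor.op, VCatStr.op_hom_ext fun a => split_legs (.inl a),
    VCatStr.op_hom_ext fun b => split_legs (.inr b)⟩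

theorem iso_rel_dist (hR : IsIdealRel R) : R.Iso R.dist.rel :=
  ⟨R.dist.mem_rel_iff.2 fun _ _ => le_rfl, hR.rel_dist_sub⟩

theorem mem_iff (hR : IsIdealRel R) {x : op Y ⟶ op X} {z : op Y ⟶ op Z} :
    R.Mem x z ↔ ∀ a b, R.dist.toFun a b ≤ Y.hom (x.unop.toFun a) (z.unop.toFun b) :=
  ⟨fun h => R.dist.mem_rel_iff.1 (hR.iso_rel_dist.1.mem h),
    fun h => hR.iso_rel_dist.2.mem (R.dist.mem_rel_iff.2 h)⟩

end IsIdealRel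

namespace VCatStr

theorem IsDifunctional.isOrdWMaltsevObj (hY : Y.IsDifunctional) : IsOrdWMaltsevObj (op Y) := by
  rintro ⟨X⟩ ⟨Z⟩ R hR x u u' z z' v hxz hz huz' hu hu'v
  have hxz' : R.Mem x z' := hR x x z z' (OrdEnrichment.ord_refl x) hxz hz
  have huv : R.Mem u v := hR u' u v v hu hu'v (OrdEnrichment.ord_refl v)
  rw [hR.mem_iff] at hxz' huz' huv ⊢
  exact fun a b => (le_inf (le_inf (hxz' a b) (huz' a b)) (huv a b)).trans (hY _ _ _ _)

theorem isDifunctional_of_isOrdWMaltsevObj (hY : IsOrdWMaltsevObj (op Y)) :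
    Y.IsDifunctional := by
  intro x y u v
  let φ : VDist (indiscrete Q PUnit) (indiscrete Q PUnit) :=
    VDist.const _ _ (Y.hom x y ⊓ Y.hom u y ⊓ Y.hom u v)
  have mem_point {s t : Y.carrier} (hst : Y.hom x y ⊓ Y.hom u y ⊓ Y.hom u v ≤ Y.hom s t) :
      φ.rel.Mem (point s).op (point t).op :=
    φ.mem_rel_iff.2 fun _ _ => hst
  have hxv : φ.rel.Mem (point x).op (point v).op :=
    hY _ _ φ.rel φ.isIdealRel_rel _ _ _ _ _ _
      (mem_point (inf_le_left.trans inf_le_left)) (OrdEnrichment.ord_refl _)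
      (mem_point (inf_le_left.trans inf_le_right)) (OrdEnrichment.ord_refl _)
      (mem_point inf_le_right)
  exact φ.mem_rel_iff.1 hxv ⟨⟩ ⟨⟩

end VCatStr

end

/-- A `V`-category is an `Ord`-W-Mal'tsev object in `(V`-`Cat)ᵒᵖ` iff it is a
symmetric `V_∧`-category. -/
theorem statement17 {V : Type w} [CompleteLattice V] (Q : QuantaleStr V)
    (Y : VCatStr.{w, u} Q) :
    IsOrdWMaltsevObj (Opposite.op Y) ↔ IsSymmetricVMeetCat Y := by
  rw [← VCatStr.isDifunctional_iff_isSymmetricVMeetCat]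
  exact ⟨VCatStr.isDifunctional_of_isOrdWMaltsevObj, VCatStr.IsDifunctional.isOrdWMaltsevObj⟩
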